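/- arXiv:2112.14711 — 2 statements merged into one kernel-verified Lean document; each statement's English description precedes it below -/
import Mathlib

section
/- Let R be an infinite principal ideal domain with fraction field K. Every nonconstant polynomial Q ∈ K[X] can be written, uniquely up to units of R and up to the order of the factors, in the form Q(X) = (A/(B·Γ)) · P_1(X)^{α_1} ⋯ P_n(X)^{α_n}, where A, B ∈ R are nonzero and coprime, each α_i ≥ 1, the P_i are pairwise non-associate totally primitive polynomials irreducible in K[X], and Γ ∈ R is a greatest common divisor of the value set {∏_i P_i(m)^{α_i} : m ∈ R}. -/
open Polynomial

section Aux
variable {R K : Type*} [CommRing R] [IsDomain R] [IsPrincipalIdealRing R]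
    [Infinite R] [Field K] [Algebra R K] [IsFractionRing R K]

theorem aux_nonzero (P : K[X]) (hP : P ≠ 0) : ∃ m : R, P.eval (algebraMap R K m) ≠ 0 := by
  by_contra! h
  apply hP
  apply Polynomial.eq_zero_of_infinite_isRoot
  have : (Set.range (algebraMap R K)).Infinite :=
    Set.infinite_range_of_injective (IsFractionRing.injective R K)
  refine this.mono ?_
  rintro _ ⟨m, rfl⟩
  exact h m

theorem aux_gcd (f : R → R) : ∃ g : R, (∀ m, g ∣ f m) ∧ ∀ d, (∀ m, d ∣ f m) → d ∣ g := by
  obtain ⟨g, hg⟩ := (IsPrincipalIdealRing.principal (Ideal.span (Set.range f))).principal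
  refine ⟨g, fun m => ?_, fun d hd => ?_⟩
  · have : f m ∈ Ideal.span (Set.range f) := Ideal.subset_span ⟨m, rfl⟩
    rw [hg] at this
    exact Ideal.mem_span_singleton.1 this
  · have h1 : g ∈ Ideal.span (Set.range f) := by
      rw [hg]; exact Ideal.mem_span_singleton_self g
    have h2 : Ideal.span (Set.range f) ≤ Ideal.span {d} := by
      rw [Ideal.span_le]
      rintro _ ⟨m, rfl⟩
      exact Ideal.mem_span_singleton.2 (hd m)
    exact Ideal.mem_span_singleton.1 (h2 h1)

theorem aux_scale (P : K[X]) (hP : P ≠ 0) : ∃ (c : K) (w : R → R), c ≠ 0 ∧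
    (∀ m, algebraMap R K (w m) = (C c * P).eval (algebraMap R K m)) ∧
    (∀ p : R, Prime p → ∃ m : R, ¬ p ∣ w m) := by
  obtain ⟨b, hbM, hb⟩ := IsLocalization.integerNormalization_spec (nonZeroDivisors R) P
  set P' := IsLocalization.integerNormalization (nonZeroDivisors R) P
  have hb0 : algebraMap R K b ≠ 0 := by
    simpa using nonZeroDivisors.ne_zero hbM
  have hv : ∀ m, algebraMap R K (P'.eval m) = algebraMap R K b * P.eval (algebraMap R K m) := by
    intro m
    rw [← Polynomial.eval_map_apply, hb]
    simp [Algebra.smul_def]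
  obtain ⟨g, hg1, hg2⟩ := aux_gcd (fun m => P'.eval m)
  choose w hw using hg1
  obtain ⟨m0, hm0⟩ := aux_nonzero (R := R) P hP
  have hg0 : g ≠ 0 := by
    rintro rfl
    have := hv m0
    rw [hw m0] at this
    rw [zero_mul, map_zero] at this
    exact mul_ne_zero hb0 hm0 this.symm
  have hg0' : algebraMap R K g ≠ 0 := by simpa using hg0
  refine ⟨algebraMap R K b / algebraMap R K g, w, div_ne_zero hb0 hg0', fun m => ?_, ?_⟩
  · have := hv m
    rw [hw m, map_mul] at this
    rw [eval_mul, eval_C]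
    field_simp
    rw [mul_comm]
    exact this
  · intro p hp
    by_contra! h
    have : g * p ∣ g := hg2 _ (fun m => by
      show _ ∣ P'.eval m
      rw [hw m]; exact mul_dvd_mul_left g (h m))
    apply hp.not_isUnit
    obtain ⟨t, ht⟩ := this
    refine IsUnit.of_mul_eq_one t ?_
    apply mul_left_cancel₀ hg0
    rw [mul_one, ← mul_assoc, ← ht]

theorem aux_unit (P : K[X]) (hP : P ≠ 0) (w : R → R)
    (hw : ∀ m, algebraMap R K (w m) = P.eval (algebraMap R K m))
    (ht : ∀ p : R, Prime p → ∃ m : R, ¬ p ∣ w m) (d : R) (hd : ∀ m, d ∣ w m) : IsUnit d := by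
  by_contra hu
  obtain ⟨m0, hm0⟩ := aux_nonzero (R := R) P hP
  have hd0 : d ≠ 0 := by
    rintro rfl
    apply hm0
    rw [← hw, zero_dvd_iff.1 (hd m0), map_zero]
  obtain ⟨p, hp, hpd⟩ := WfDvdMonoid.exists_irreducible_factor hu hd0
  obtain ⟨m, hm⟩ := ht p hp.prime
  exact hm (hpd.trans (hd m))

theorem aux_frac (c : K) : ∃ a b : R, b ≠ 0 ∧ IsCoprime a b ∧
    c = algebraMap R K a / algebraMap R K b := by
  obtain ⟨a, b, hab, hc⟩ := IsFractionRing.exists_reduced_fraction R c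
  exact ⟨a, b, nonZeroDivisors.coe_ne_zero b, hab.isCoprime, by
    rw [← hc, IsFractionRing.mk'_eq_div]⟩

theorem aux_ratio (P P' : K[X]) (hP : P ≠ 0) (hP' : P' ≠ 0) (w w' : R → R)
    (hw : ∀ m, algebraMap R K (w m) = P.eval (algebraMap R K m))
    (ht : ∀ p : R, Prime p → ∃ m : R, ¬ p ∣ w m)
    (hw' : ∀ m, algebraMap R K (w' m) = P'.eval (algebraMap R K m))
    (ht' : ∀ p : R, Prime p → ∃ m : R, ¬ p ∣ w' m)
    (h : Associated P P') : ∃ u : Rˣ, P' = C (algebraMap R K (u : R)) * P := by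
  obtain ⟨v, hv⟩ := h
  obtain ⟨c, hc, hcv⟩ := Polynomial.isUnit_iff.1 v.isUnit
  rw [← hcv] at hv
  obtain ⟨a, b, hb, hab, hc'⟩ := aux_frac (R := R) c
  have hb0 : algebraMap R K b ≠ 0 := by simpa using hb
  have key : ∀ m, b * w' m = a * w m := by
    intro m
    apply IsFractionRing.injective R K
    rw [map_mul, map_mul, hw, hw', ← hv, hc', eval_mul, eval_C]
    field_simp
  have hbu : IsUnit b := aux_unit P hP w hw ht b fun m =>
    hab.symm.dvd_of_dvd_mul_left ⟨_, (key m).symm⟩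
  have hau : IsUnit a := aux_unit P' hP' w' hw' ht' a fun m =>
    hab.dvd_of_dvd_mul_left ⟨_, key m⟩
  obtain ⟨a, rfl⟩ := hau
  obtain ⟨b, rfl⟩ := hbu
  refine ⟨a * b⁻¹, ?_⟩
  rw [← hv, mul_comm, hc']
  congr 2
  rw [div_eq_iff hb0, ← map_mul]
  simp

theorem aux_mult {n : ℕ} (Pl : Fin n → K[X]) (α : Fin n → ℕ) 
    (hirr : ∀ i, Irreducible (Pl i))
    (hna : ∀ i j, i ≠ j → ¬ Associated (Pl i) (Pl j)) (i : Fin n) :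
    emultiplicity (Pl i) (∏ j, Pl j ^ α j) = α i := by
  rw [Finset.emultiplicity_prod (hirr i).prime, Finset.sum_eq_single i]
  · rw [emultiplicity_pow (hirr i).prime]
    have : FiniteMultiplicity (Pl i) (Pl i) :=
      FiniteMultiplicity.of_prime_left (hirr i).prime (hirr i).ne_zero
    rw [this.emultiplicity_self, mul_one]
  · intro j _ hj
    rw [emultiplicity_eq_zero]
    intro hd
    have := (hirr i).prime.dvd_of_dvd_pow hd
    exact hna i j hj.symm ((hirr i).associated_of_dvd (hirr j) this)
  · simp

theorem aux_exists (P : K[X]) (hP : P ≠ 0) : ∃ (n : ℕ) (Pl : Fin n → K[X]) (α : Fin n → ℕ) (c : K),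
    c ≠ 0 ∧ (∀ i, 1 ≤ α i) ∧ (∀ i, Irreducible (Pl i)) ∧
    (∀ i j, i ≠ j → ¬ Associated (Pl i) (Pl j)) ∧ P = C c * ∏ i, Pl i ^ α i := by
  classical
  let s := UniqueFactorizationMonoid.normalizedFactors P
  let e := s.toFinset.equivFin
  refine ⟨_, fun i => (e.symm i : K[X]), fun i => s.count (e.symm i : K[X]), ?_⟩
  obtain ⟨v, hv⟩ := UniqueFactorizationMonoid.prod_normalizedFactors hP
  obtain ⟨c, hc, hcv⟩ := Polynomial.isUnit_iff.1 v.isUnit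
  refine ⟨c, hc.ne_zero, fun i => ?_, fun i => ?_, fun i j hij hass => ?_, ?_⟩
  · exact Multiset.one_le_count_iff_mem.2 (Multiset.mem_toFinset.1 (e.symm i).2)
  · exact UniqueFactorizationMonoid.irreducible_of_normalized_factor _
      (Multiset.mem_toFinset.1 (e.symm i).2)
  · apply hij
    apply e.symm.injective
    apply Subtype.ext
    have h1 := UniqueFactorizationMonoid.normalize_normalized_factor _
      (Multiset.mem_toFinset.1 (e.symm i).2)
    have h2 := UniqueFactorizationMonoid.normalize_normalized_factor _
      (Multiset.mem_toFinset.1 (e.symm j).2)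
    rw [← h1, ← h2]
    exact normalize_eq_normalize hass.dvd hass.symm.dvd
  · rw [Equiv.prod_comp e.symm (fun x => (x : K[X]) ^ s.count (x : K[X])),
      Finset.prod_coe_sort s.toFinset (fun x => x ^ s.count x), ← Finset.prod_multiset_count, hcv,
      mul_comm]
    exact hv.symm

theorem aux_match {n n' : ℕ} (Pl : Fin n → K[X]) (α : Fin n → ℕ)
    (Pl' : Fin n' → K[X]) (α' : Fin n' → ℕ)
    (hα : ∀ i, 1 ≤ α i) 
    (hirr : ∀ i, Irreducible (Pl i)) (hirr' : ∀ i, Irreducible (Pl' i))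
    (h : (∏ j, Pl j ^ α j) ∣ (∏ j, Pl' j ^ α' j)) (i : Fin n) :
    ∃ j, Associated (Pl i) (Pl' j) := by
  have h1 : Pl i ∣ ∏ j, Pl' j ^ α' j :=
    ((dvd_pow_self _ (by have := hα i; omega)).trans
      (Finset.dvd_prod_of_mem (fun j => Pl j ^ α j) (Finset.mem_univ i))).trans h
  obtain ⟨j, _, hj⟩ := (hirr i).prime.exists_mem_finset_dvd h1
  exact ⟨j, (hirr i).associated_of_dvd (hirr' j) ((hirr i).prime.dvd_of_dvd_pow hj)⟩

theorem aux_equiv {n n' : ℕ} (Pl : Fin n → K[X]) (α : Fin n → ℕ)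
    (Pl' : Fin n' → K[X]) (α' : Fin n' → ℕ)
    (hα : ∀ i, 1 ≤ α i) (hα' : ∀ i, 1 ≤ α' i)
    (hirr : ∀ i, Irreducible (Pl i)) (hirr' : ∀ i, Irreducible (Pl' i))
    (hna : ∀ i j, i ≠ j → ¬ Associated (Pl i) (Pl j))
    (hna' : ∀ i j, i ≠ j → ¬ Associated (Pl' i) (Pl' j))
    (h : Associated (∏ j, Pl j ^ α j) (∏ j, Pl' j ^ α' j)) :
    ∃ σ : Fin n ≃ Fin n', (∀ i, α' (σ i) = α i) ∧ ∀ i, Associated (Pl i) (Pl' (σ i)) := by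
  choose f hf using aux_match Pl α Pl' α' hα hirr hirr' h.dvd
  choose g hg using aux_match Pl' α' Pl α hα' hirr' hirr h.symm.dvd
  refine ⟨⟨f, g, fun i => ?_, fun i => ?_⟩, fun i => ?_, hf⟩
  · by_contra hne
    exact hna _ _ hne ((hf i).trans (hg _)).symm
  · by_contra hne
    exact hna' _ _ hne ((hg i).trans (hf _)).symm
  · have h1 := aux_mult Pl α hirr hna i
    have h2 := aux_mult Pl' α' hirr' hna' (f i)
    rw [emultiplicity_eq_of_associated_left (hf i),
      ← emultiplicity_eq_of_associated_right h, h1] at h2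
    exact_mod_cast h2.symm

end Aux

/-- Every nonconstant `Q ∈ K[X]` can be written, uniquely up to units of
`R` and the order of the factors, as `Q = (A/(B·Γ)) · ∏ i, (P i)^(α i)` with `A, B ∈ R`
nonzero and coprime, `α i ≥ 1`, the `P i` pairwise non-associate totally primitive
polynomials irreducible in `K[X]` (integral values witnessed by `w i`), and `Γ ∈ R` a gcd of
the value set `{∏ i, P i (m)^(α i) : m ∈ R}`. -/
theorem stmt12 {R K : Type*} [CommRing R] [IsDomain R] [IsPrincipalIdealRing R]
    [Infinite R] [Field K] [Algebra R K] [IsFractionRing R K]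
    (Q : K[X]) (hnc : 0 < Q.natDegree) :
    ∃ (A B Γ : R) (n : ℕ) (Pl : Fin n → K[X]) (α : Fin n → ℕ) (w : Fin n → R → R),
      A ≠ 0 ∧ B ≠ 0 ∧ Γ ≠ 0 ∧ IsCoprime A B ∧ (∀ i, 1 ≤ α i) ∧
      (∀ i, Irreducible (Pl i)) ∧
      (∀ i m, algebraMap R K (w i m) = (Pl i).eval (algebraMap R K m)) ∧
      (∀ i, ∀ p : R, Prime p → ∃ m : R, ¬ p ∣ w i m) ∧
      (∀ i j, i ≠ j → ¬ Associated (Pl i) (Pl j)) ∧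
      Q = Polynomial.C (algebraMap R K A / (algebraMap R K B * algebraMap R K Γ)) *
            ∏ i, Pl i ^ α i ∧
      (∀ m : R, Γ ∣ ∏ i, w i m ^ α i) ∧
      (∀ d : R, (∀ m : R, d ∣ ∏ i, w i m ^ α i) → d ∣ Γ) ∧
      (∀ (A' B' Γ' : R) (n' : ℕ) (Pl' : Fin n' → K[X]) (α' : Fin n' → ℕ)
          (w' : Fin n' → R → R),
        A' ≠ 0 → B' ≠ 0 → Γ' ≠ 0 → IsCoprime A' B' → (∀ i, 1 ≤ α' i) →
        (∀ i, Irreducible (Pl' i)) →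
        (∀ i m, algebraMap R K (w' i m) = (Pl' i).eval (algebraMap R K m)) →
        (∀ i, ∀ p : R, Prime p → ∃ m : R, ¬ p ∣ w' i m) →
        (∀ i j, i ≠ j → ¬ Associated (Pl' i) (Pl' j)) →
        Q = Polynomial.C (algebraMap R K A' / (algebraMap R K B' * algebraMap R K Γ')) *
              ∏ i, Pl' i ^ α' i →
        (∀ m : R, Γ' ∣ ∏ i, w' i m ^ α' i) →
        (∀ d : R, (∀ m : R, d ∣ ∏ i, w' i m ^ α' i) → d ∣ Γ') →
        Associated A A' ∧ Associated B B' ∧ Associated Γ Γ' ∧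
          ∃ σ : Fin n ≃ Fin n', (∀ i, α' (σ i) = α i) ∧
            ∀ i, ∃ u : Rˣ, Pl' (σ i) = Polynomial.C (algebraMap R K (u : R)) * Pl i) := by
  classical
  have hQ : Q ≠ 0 := by
    rintro rfl
    simp at hnc
  obtain ⟨n, P0, α, c, hc, hα, hirr0, hna0, hQ0⟩ := aux_exists Q hQ
  choose k w hk hw ht using fun i => aux_scale (R := R) (P0 i) (hirr0 i).ne_zero
  have hass : ∀ i, Associated (P0 i) (C (k i) * P0 i) := fun i =>
    
    (associated_isUnit_mul_right_iff (isUnit_C.2 (hk i).isUnit)).2 (Associated.refl _)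
  have hirr : ∀ i, Irreducible (C (k i) * P0 i) := fun i => (hass i).irreducible (hirr0 i)
  have hna : ∀ i j, i ≠ j → ¬ Associated (C (k i) * P0 i) (C (k j) * P0 j) :=
    fun i j hij h => hna0 i j hij ((hass i).trans (h.trans (hass j).symm))
  obtain ⟨Γ, hΓ1, hΓ2⟩ := aux_gcd (fun m => ∏ i, w i m ^ α i)
  have hprod : ∀ m, algebraMap R K (∏ i, w i m ^ α i) =
      (∏ i, (C (k i) * P0 i) ^ α i).eval (algebraMap R K m) := by
    intro m
    rw [map_prod, eval_prod]
    exact Finset.prod_congr rfl fun i _ => by rw [map_pow, eval_pow, hw]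
  have hprod0 : (∏ i, (C (k i) * P0 i) ^ α i) ≠ 0 :=
    Finset.prod_ne_zero_iff.2 fun i _ => pow_ne_zero _ (hirr i).ne_zero
  have hΓ : Γ ≠ 0 := by
    rintro rfl
    obtain ⟨m, hm⟩ := aux_nonzero (R := R) _ hprod0
    apply hm
    rw [← hprod, zero_dvd_iff.1 (hΓ1 m), map_zero]
  have hΓK : algebraMap R K Γ ≠ 0 := by simpa using hΓ
  have hkk : (∏ i, k i ^ α i) ≠ 0 := Finset.prod_ne_zero_iff.2 fun i _ => pow_ne_zero _ (hk i)
  obtain ⟨A, B, hB, hAB, hc'⟩ := aux_frac (R := R) (c / (∏ i, k i ^ α i) * algebraMap R K Γ)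
  have hBK : algebraMap R K B ≠ 0 := by simpa using hB
  have hA : A ≠ 0 := by
    rintro rfl
    rw [map_zero, zero_div] at hc'
    exact mul_ne_zero (div_ne_zero hc hkk) hΓK hc'
  have hQ1 : Q = C (algebraMap R K A / (algebraMap R K B * algebraMap R K Γ)) *
            ∏ i, (C (k i) * P0 i) ^ α i := by
    have h1 : ∏ i, (C (k i) * P0 i) ^ α i = C (∏ i, k i ^ α i) * ∏ i, P0 i ^ α i := by
      simp only [mul_pow, Finset.prod_mul_distrib, map_prod, map_pow]
    rw [h1, ← mul_assoc, ← C_mul, ← div_div, ← hc', hQ0]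
    congr 2
    field_simp
  refine ⟨A, B, Γ, n, fun i => C (k i) * P0 i, α, w, hA, hB, hΓ, hAB, hα, hirr, hw, ht, hna,
    hQ1, hΓ1, hΓ2, ?_⟩
  intro A' B' Γ' n' Pl' α' w' hA' hB' hΓ' hAB' hα' hirr' hw' ht' hna' hQ' hΓ1' hΓ2'
  have hAK : algebraMap R K A ≠ 0 := by simpa using hA
  have hAK' : algebraMap R K A' ≠ 0 := by simpa using hA'
  have hBK' : algebraMap R K B' ≠ 0 := by simpa using hB'
  have hΓK' : algebraMap R K Γ' ≠ 0 := by simpa using hΓ'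
  have hassQ : Associated (∏ i, (C (k i) * P0 i) ^ α i) (∏ i, Pl' i ^ α' i) := by
    have h1 : Associated (∏ i, (C (k i) * P0 i) ^ α i) Q := by
      rw [hQ1]
      exact (associated_isUnit_mul_right_iff
        (isUnit_C.2 (div_ne_zero hAK (mul_ne_zero hBK hΓK)).isUnit)).2 (Associated.refl _)
    have h2 : Associated (∏ i, Pl' i ^ α' i) Q := by
      rw [hQ']
      exact (associated_isUnit_mul_right_iff
        (isUnit_C.2 (div_ne_zero hAK' (mul_ne_zero hBK' hΓK')).isUnit)).2 (Associated.refl _)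
    exact h1.trans h2.symm
  obtain ⟨σ, hσ, hσa⟩ := aux_equiv (fun i => C (k i) * P0 i) α Pl' α' hα hα' hirr hirr' hna hna'
    hassQ
  choose u hu using fun i => aux_ratio (R := R) _ _ (hirr i).ne_zero (hirr' (σ i)).ne_zero _ _
    (hw i) (ht i) (hw' (σ i)) (ht' (σ i)) (hσa i)
  have hww : ∀ i m, w' (σ i) m = u i * w i m := by
    intro i m
    apply IsFractionRing.injective R K
    rw [hw', hu, map_mul, hw, eval_mul, eval_C]
  let U : Rˣ := ∏ i, u i ^ α i
  have hU : (U : R) = ∏ i, (u i : R) ^ α i := by simp [U]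
  have hprodw : ∀ m, ∏ i, w' i m ^ α' i = U * ∏ i, w i m ^ α i := by
    intro m
    rw [← Equiv.prod_comp σ, hU, ← Finset.prod_mul_distrib]
    exact Finset.prod_congr rfl fun i _ => by rw [hσ, hww, mul_pow]
  have hprodP : ∏ i, Pl' i ^ α' i = C (algebraMap R K U) * ∏ i, (C (k i) * P0 i) ^ α i := by
    rw [← Equiv.prod_comp σ, hU, map_prod, map_prod, ← Finset.prod_mul_distrib]
    exact Finset.prod_congr rfl fun i _ => by rw [hσ, hu, mul_pow, map_pow, map_pow]
  have hΓΓ : Associated Γ Γ' := by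
    apply associated_of_dvd_dvd
    · apply hΓ2'
      intro m
      rw [hprodw]
      exact (hΓ1 m).mul_left _
    · apply hΓ2
      intro m
      have := hΓ1' m
      rw [hprodw] at this
      exact (Units.dvd_mul_left).1 this
  obtain ⟨v, hv⟩ := hΓΓ
  have hcc : algebraMap R K A / (algebraMap R K B * algebraMap R K Γ) =
      algebraMap R K A' / (algebraMap R K B' * algebraMap R K Γ') * algebraMap R K U := by
    have h1 := hQ1.symm.trans hQ'
    rw [hprodP, ← mul_assoc, ← C_mul] at h1
    exact C_injective (mul_right_cancel₀ hprod0 h1)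
  have hvK : algebraMap R K v ≠ 0 := by simp
  have hAA : (A * B') * v = (A' * B) * U := by
    apply IsFractionRing.injective R K
    rw [← hv] at hcc
    simp only [map_mul] at hcc ⊢
    field_simp at hcc
    linear_combination hcc
  have e1 : A * B' ∣ A' * B := (Units.dvd_mul_right (u := U)).1 ⟨v, hAA.symm⟩
  have e2 : A' * B ∣ A * B' := (Units.dvd_mul_right (u := v)).1 ⟨U, hAA⟩
  refine ⟨associated_of_dvd_dvd ?_ ?_, associated_of_dvd_dvd ?_ ?_, ⟨v, hv⟩, σ, hσ,
    fun i => ⟨u i, hu i⟩⟩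
  · exact hAB.dvd_of_dvd_mul_right ((dvd_mul_right _ _).trans e1)
  · exact hAB'.dvd_of_dvd_mul_right ((dvd_mul_right _ _).trans e2)
  · exact hAB.symm.dvd_of_dvd_mul_left ((dvd_mul_left _ _).trans e2)
  · exact hAB'.symm.dvd_of_dvd_mul_left ((dvd_mul_left _ _).trans e1)
end

section
/- Let n ≥ 1 and let Q ∈ ℚ[X] be a polynomial such that for every k ∈ ℕ, Q(k) is an n-th power in ℚ (i.e., there exists r ∈ ℚ with Q(k) = r^n). Then Q is an n-th power in ℚ[X], i.e., there exists R ∈ ℚ[X] with Q = R^n. -/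
open Polynomial

lemma aux_prime (f : ℤ[X]) (hf : 0 < f.natDegree) (M : ℕ) :
    ∃ p : ℕ, p.Prime ∧ M < p ∧ ∃ x : ℤ, (p : ℤ) ∣ f.eval x := by
  by_cases h0 : f.eval 0 = 0
  · obtain ⟨p, hp, hpp⟩ := Nat.exists_infinite_primes (M + 1)
    exact ⟨p, hpp, hp, 0, by simp [h0]⟩
  set c := f.eval 0 with hc
  have hM : ((M.factorial : ℕ) : ℤ) ≠ 0 := by exact_mod_cast M.factorial_ne_zero
  have hcm : c * (M.factorial : ℤ) ≠ 0 := mul_ne_zero h0 hM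
  set q := f.comp (C (c * (M.factorial : ℤ)) * X) with hq
  have hqd : 0 < q.natDegree := by
    rw [hq, natDegree_comp, natDegree_C_mul_X _ hcm]; simpa using hf
  have hne : ∀ a : ℤ, q - C a ≠ 0 := by
    intro a ha
    rw [sub_eq_zero.1 ha] at hqd
    simp at hqd
  obtain ⟨t, ht⟩ : ∃ t : ℤ, ((q - C c) * (q - C (-c))).eval t ≠ 0 := by
    by_contra hcon
    push Not at hcon
    exact mul_ne_zero (hne c) (hne (-c)) (Polynomial.funext (by simpa using hcon))
  have hqt : q.eval t = f.eval (c * (M.factorial : ℤ) * t) := by simp [hq]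
  have hdecomp : ∀ x : ℤ, f.eval x = f.divX.eval x * x + c := by
    intro x
    conv_lhs => rw [← divX_mul_X_add f]
    simp [hc, coeff_zero_eq_eval_zero]
  set y := (M.factorial : ℤ) * t * f.divX.eval (c * (M.factorial : ℤ) * t) + 1 with hy
  have hfy : f.eval (c * (M.factorial : ℤ) * t) = c * y := by
    rw [hdecomp, hy]; ring
  have hy1 : y.natAbs ≠ 1 := by
    intro h1
    apply ht
    rw [eval_mul, eval_sub, eval_sub, eval_C, eval_C, hqt, hfy]
    rcases Int.natAbs_eq y with h | h <;> rw [h, h1] <;> simp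
  obtain ⟨p, hp, hpy⟩ := Nat.exists_prime_and_dvd hy1
  have hpy' : (p : ℤ) ∣ y := Int.natCast_dvd.2 hpy
  refine ⟨p, hp, ?_, _, hfy ▸ Dvd.dvd.mul_left hpy' c⟩
  by_contra hle
  have h1 : (p : ℤ) ∣ (M.factorial : ℤ) :=
    Int.natCast_dvd_natCast.2 ((hp.dvd_factorial).2 (not_lt.1 hle))
  have h2 : (p : ℤ) ∣ 1 := by
    have := dvd_sub hpy' ((h1.mul_right t).mul_right (f.divX.eval (c * (M.factorial : ℤ) * t)))
    simpa [hy] using this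
  have : p ∣ 1 := by exact_mod_cast h2
  exact hp.one_lt.ne' (Nat.dvd_one.1 this)

lemma aux_int (P : ℚ[X]) : ∃ d : ℤ, d ≠ 0 ∧ ∃ f : ℤ[X],
    f.map (Int.castRingHom ℚ) = C (d : ℚ) * P := by
  obtain ⟨b, hbm, hb⟩ := IsLocalization.integerNormalization_spec (nonZeroDivisors ℤ) P
  refine ⟨b, nonZeroDivisors.ne_zero hbm,
    IsLocalization.integerNormalization (nonZeroDivisors ℤ) P, ?_⟩
  rw [show Int.castRingHom ℚ = algebraMap ℤ ℚ from rfl, hb]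
  ext i
  simp

lemma aux_bezout (f g : ℤ[X]) (h : IsCoprime (f.map (Int.castRingHom ℚ))
    (g.map (Int.castRingHom ℚ))) : ∃ D : ℤ, D ≠ 0 ∧ ∃ A B : ℤ[X], A * f + B * g = C D := by
  obtain ⟨a, b, hab⟩ := h
  obtain ⟨d, hd, A, hA⟩ := aux_int a
  obtain ⟨e, he, B, hB⟩ := aux_int b
  refine ⟨d * e, mul_ne_zero hd he, C e * A, C d * B, ?_⟩
  apply Polynomial.map_injective (Int.castRingHom ℚ) Int.cast_injective
  simp only [Polynomial.map_add, Polynomial.map_mul, hA, hB, Polynomial.map_C, C_mul, map_mul,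
    eq_intCast (Int.castRingHom ℚ)]
  linear_combination (C (d : ℚ) * C (e : ℚ)) * hab

lemma aux_key (n : ℕ) (P S : ℚ[X]) (hP : Irreducible P) (hPS : ¬ P ∣ S) (e N : ℕ)
    (h : ∀ k : ℕ, N ≤ k → ∃ r : ℚ, (P ^ e * S).eval (k : ℚ) = r ^ n) : n ∣ e := by
  obtain ⟨d, hd, f, hf⟩ := aux_int P
  obtain ⟨d', hd', g, hg⟩ := aux_int S
  have hdq : (d : ℚ) ≠ 0 := by exact_mod_cast hd
  have hdq' : (d' : ℚ) ≠ 0 := by exact_mod_cast hd'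
  have hu : IsUnit (C (d : ℚ)) := isUnit_C.2 hdq.isUnit
  have hu' : IsUnit (C (d' : ℚ)) := isUnit_C.2 hdq'.isUnit
  have hco : IsCoprime P S := (hP.coprime_iff_not_dvd).2 hPS
  have hsep : IsCoprime P (derivative P) := hP.separable
  obtain ⟨D, hD, A, B, hAB⟩ := aux_bezout f g (by
    rw [hf, hg, isCoprime_mul_unit_left_left hu, isCoprime_mul_unit_left_right hu']; exact hco)
  obtain ⟨E, hE, A', B', hAB'⟩ := aux_bezout f (derivative f) (by
    rw [← derivative_map, hf, derivative_C_mul, isCoprime_mul_unit_left_left hu,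
      isCoprime_mul_unit_left_right hu]; exact hsep)
  have hfdeg : 0 < f.natDegree := by
    have h1 : (f.map (Int.castRingHom ℚ)).natDegree = f.natDegree :=
      natDegree_map_eq_of_injective Int.cast_injective f
    rw [← h1, hf, natDegree_C_mul hdq]
    exact hP.natDegree_pos
  set c : ℤ := d ^ e * d' with hc
  have hc0 : c ≠ 0 := mul_ne_zero (pow_ne_zero _ hd) hd'
  obtain ⟨p, hp, hMp, x, hx⟩ := aux_prime f hfdeg (D.natAbs + E.natAbs + c.natAbs)
  have hbig : ∀ a : ℤ, a ≠ 0 → a.natAbs < p → ¬ (p : ℤ) ∣ a := by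
    intro a ha hap hdv
    exact absurd (Nat.le_of_dvd (Int.natAbs_pos.2 ha) (Int.natCast_dvd.1 hdv)) (by omega)
  have hpD := hbig D hD (by omega)
  have hpE := hbig E hE (by omega)
  have hpc := hbig c hc0 (by omega)
  have hp0 : (p : ℤ) ≠ 0 := by exact_mod_cast hp.ne_zero
  have hpI : Prime (p : ℤ) := Nat.prime_iff_prime_int.1 hp
  -- a good natural number
  obtain ⟨k, hkN, hk1⟩ : ∃ k : ℕ, N ≤ k ∧ (p : ℤ) ∣ f.eval (k : ℤ) := by
    refine ⟨(x % p).toNat + p * N, ?_, ?_⟩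
    · nlinarith [hp.one_lt, Nat.zero_le (x % p).toNat, Nat.zero_le N]
    · have h1 : (((x % p).toNat + p * N : ℕ) : ℤ) = x + p * (N - x / p) := by
        push_cast
        rw [Int.toNat_of_nonneg (Int.emod_nonneg x hp0)]
        linarith [Int.emod_add_mul_ediv x p]
      rw [h1]
      have h2 := sub_dvd_eval_sub (x + p * (N - x / p)) x f
      have h3 : (p : ℤ) ∣ x + p * (N - x / p) - x := ⟨N - x / p, by ring⟩
      exact (dvd_sub_left hx).1 (h3.trans h2) |> fun h => h
  obtain ⟨k, hkN, hk1, hk2⟩ : ∃ k : ℕ, N ≤ k ∧ (p : ℤ) ∣ f.eval (k : ℤ) ∧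
      ¬ (p : ℤ) ^ 2 ∣ f.eval (k : ℤ) := by
    by_cases hk2 : (p : ℤ) ^ 2 ∣ f.eval (k : ℤ)
    · obtain ⟨z, hz⟩ := f.binomExpansion (k : ℤ) (p : ℤ)
      refine ⟨k + p, by omega, ?_, ?_⟩
      · push_cast
        rw [hz]
        exact dvd_add (dvd_add hk1 (dvd_mul_left _ _)) ((dvd_pow_self _ two_ne_zero).mul_left _)
      · push_cast
        rw [hz]
        intro hdv
        have h1 : (p : ℤ) ^ 2 ∣ (derivative f).eval (k : ℤ) * p := by
          have := dvd_sub (dvd_sub hdv (dvd_mul_left ((p : ℤ) ^ 2) z)) hk2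
          ring_nf at this ⊢
          exact this
        rw [pow_two] at h1
        have h2 : (p : ℤ) ∣ (derivative f).eval (k : ℤ) := (mul_dvd_mul_iff_right hp0).1 h1
        apply hpE
        have h3 := congrArg (eval (k : ℤ)) hAB'
        simp only [eval_add, eval_mul, eval_C] at h3
        rw [← h3]
        exact dvd_add (hk1.mul_left _) (h2.mul_left _)
    · exact ⟨k, hkN, hk1, hk2⟩
  have hkg : ¬ (p : ℤ) ∣ g.eval (k : ℤ) := by
    intro h2
    apply hpD
    have h3 := congrArg (eval (k : ℤ)) hAB
    simp only [eval_add, eval_mul, eval_C] at h3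
    rw [← h3]
    exact dvd_add (hk1.mul_left _) (h2.mul_left _)
  have hf0 : f.eval (k : ℤ) ≠ 0 := fun h0 => hk2 (by rw [h0]; exact dvd_zero _)
  have hg0 : g.eval (k : ℤ) ≠ 0 := fun h0 => hkg (by rw [h0]; exact dvd_zero _)
  obtain ⟨r, hr⟩ := h k hkN
  have hfk : ((f.eval (k : ℤ) : ℤ) : ℚ) = d * P.eval (k : ℚ) := by
    have := congrArg (eval (k : ℚ)) hf
    rw [eval_mul, eval_C] at this
    rw [← this]
    simpa using (eval_intCast_map (Int.castRingHom ℚ) f (k : ℤ)).symm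
  have hgk : ((g.eval (k : ℤ) : ℤ) : ℚ) = d' * S.eval (k : ℚ) := by
    have := congrArg (eval (k : ℚ)) hg
    rw [eval_mul, eval_C] at this
    rw [← this]
    simpa using (eval_intCast_map (Int.castRingHom ℚ) g (k : ℤ)).symm
  have heq : ((f.eval (k : ℤ) : ℤ) : ℚ) ^ e * ((g.eval (k : ℤ) : ℤ) : ℚ) = (c : ℚ) * r ^ n := by
    rw [hfk, hgk, ← hr, hc]
    simp only [eval_mul, eval_pow]
    push_cast
    ring
  haveI : Fact p.Prime := ⟨hp⟩
  have hf0' : ((f.eval (k : ℤ) : ℤ) : ℚ) ≠ 0 := by exact_mod_cast hf0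
  have hg0' : ((g.eval (k : ℤ) : ℤ) : ℚ) ≠ 0 := by exact_mod_cast hg0
  have hc0' : (c : ℚ) ≠ 0 := by exact_mod_cast hc0
  have hrn : r ^ n ≠ 0 := by
    intro h0
    rw [h0, mul_zero] at heq
    exact mul_ne_zero (pow_ne_zero _ hf0') hg0' heq
  have hv := congrArg (padicValRat p) heq
  rw [padicValRat.mul (pow_ne_zero _ hf0') hg0', padicValRat.mul hc0' hrn,
    padicValRat.pow, padicValRat.of_int, padicValRat.of_int, padicValRat.of_int,
    padicValInt.eq_zero_of_not_dvd hkg, padicValInt.eq_zero_of_not_dvd hpc] at hv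
  have hvf : padicValInt p (f.eval (k : ℤ)) = 1 := by
    have h1 := (padicValInt_dvd_iff 1 (f.eval (k : ℤ))).1 (by simpa using hk1)
    have h2 := mt (padicValInt_dvd_iff 2 (f.eval (k : ℤ))).2 (by exact_mod_cast hk2)
    push Not at h2
    have := h1.resolve_left hf0
    omega
  rw [hvf] at hv
  rcases Nat.eq_zero_or_pos n with hn | hn
  · subst hn
    simp at hv
    simp [hv]
  have hr0 : r ≠ 0 := by
    rintro rfl
    exact hrn (zero_pow hn.ne')
  rw [padicValRat.pow] at hv
  have : (n : ℤ) ∣ (e : ℤ) := ⟨padicValRat p r, by simpa using hv⟩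
  exact_mod_cast this

lemma aux_main (n : ℕ) (hn : 1 ≤ n) (m : ℕ) : ∀ Q : ℚ[X], Q.natDegree ≤ m → ∀ N : ℕ,
    (∀ k : ℕ, N ≤ k → ∃ r : ℚ, Q.eval (k : ℚ) = r ^ n) → ∃ R : ℚ[X], Q = R ^ n := by
  induction m with
  | zero =>
    intro Q hQ N h
    obtain ⟨r, hr⟩ := h N le_rfl
    rw [eq_C_of_natDegree_le_zero hQ] at hr ⊢
    rw [eval_C] at hr
    exact ⟨C r, by rw [hr, C_pow]⟩
  | succ m ih =>
    intro Q hQ N h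
    rcases Nat.eq_zero_or_pos Q.natDegree with h0 | hpos
    · exact ih Q (by omega) N h
    have hQ0 : Q ≠ 0 := by rintro rfl; simp at hpos
    have hQu : ¬ IsUnit Q := fun hu => by
      have := natDegree_eq_zero_of_isUnit hu
      omega
    obtain ⟨P, hP, hPQ⟩ := WfDvdMonoid.exists_irreducible_factor hQu hQ0
    have hfin : FiniteMultiplicity P Q := FiniteMultiplicity.of_not_isUnit hP.not_isUnit hQ0
    obtain ⟨S, hS, hPS⟩ := hfin.exists_eq_pow_mul_and_not_dvd
    set e := multiplicity P Q with he
    have hepos : e ≠ 0 := by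
      intro h0
      rw [h0, pow_zero, one_mul] at hS
      exact hPS (hS ▸ hPQ)
    obtain ⟨j, hj⟩ := aux_key n P S hP hPS e N (by rw [← hS]; exact h)
    have hS0 : S ≠ 0 := by rintro rfl; simp at hPS
    have hdeg : Q.natDegree = e * P.natDegree + S.natDegree := by
      conv_lhs => rw [hS]
      rw [natDegree_mul (pow_ne_zero _ hP.ne_zero) hS0, natDegree_pow]
    have hPpos := hP.natDegree_pos
    have hep : 0 < e * P.natDegree := Nat.mul_pos (Nat.pos_of_ne_zero hepos) hPpos
    -- bound on natural roots of P
    obtain ⟨N', hN'⟩ : ∃ N' : ℕ, ∀ k : ℕ, N' ≤ k → P.eval (k : ℚ) ≠ 0 := by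
      have hfs : {k : ℕ | P.eval (k : ℚ) = 0}.Finite := by
        have h1 : {x : ℚ | P.IsRoot x}.Finite := finite_setOfPred_isRoot hP.ne_zero
        exact h1.preimage (Nat.cast_injective.injOn)
      obtain ⟨b, hb⟩ := hfs.bddAbove
      refine ⟨b + 1, fun k hk h0 => ?_⟩
      have := hb h0
      omega
    obtain ⟨R, hR⟩ := ih S (by omega) (max N N') (by
      intro k hk
      obtain ⟨r, hr⟩ := h k (le_trans (le_max_left _ _) hk)
      have hPk := hN' k (le_trans (le_max_right _ _) hk)
      refine ⟨r / (P.eval (k : ℚ)) ^ j, ?_⟩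
      rw [hS, eval_mul, eval_pow, hj, mul_comm n j, pow_mul] at hr
      rw [div_pow, ← hr]
      field_simp)
    refine ⟨P ^ j * R, ?_⟩
    rw [hS, hj, hR, mul_pow, mul_comm n j, pow_mul]

/-- If `n ≥ 1` and `Q ∈ ℚ[X]` is such that `Q(k)` is an `n`-th power in
`ℚ` for every natural number `k`, then `Q` is an `n`-th power in `ℚ[X]`. -/
theorem stmt15 (n : ℕ) (hn : 1 ≤ n) (Q : ℚ[X])
    (h : ∀ k : ℕ, ∃ r : ℚ, Q.eval (k : ℚ) = r ^ n) :
    ∃ R : ℚ[X], Q = R ^ n :=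
  aux_main n hn Q.natDegree Q le_rfl 0 (fun k _ => h k)
end
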